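/- arXiv:2309.03850 — 5 statements merged into one kernel-verified Lean document; each statement's English description precedes it below -/
import Mathlib

section
/- For every γ ∈ ℂ there exists exactly one function f : V → ℂ that is radial around v_0 and satisfies μ_1 f = γ·f and f(v_0) = 1 (the spherical function with eigenvalue γ). -/
open scoped BigOperators ComplexOrder

/-- A semi-homogeneous tree `T_{q_+,q_-}`: a connected acyclic simple graph with a
parity function `eps` (true = `+`, false = `−`) that flips across edges, in which every
vertex of parity `+` has exactly `qp + 1` neighbors and every vertex of parity `−` has
exactly `qm + 1` neighbors.  Spheres are finite (this follows from local finiteness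
and connectedness, and is recorded as a field for convenience). -/
structure SemiHomTree (qp qm : ℕ) (V : Type) where
  G : SimpleGraph V
  connected : G.Connected
  acyclic : G.IsAcyclic
  eps : V → Bool
  adj_parity : ∀ ⦃v w : V⦄, G.Adj v w → eps w = !eps v
  nbr_finite : ∀ v : V, {w : V | G.Adj v w}.Finite
  degree_plus : ∀ v : V, eps v = true → {w : V | G.Adj v w}.ncard = qp + 1
  degree_minus : ∀ v : V, eps v = false → {w : V | G.Adj v w}.ncard = qm + 1
  sphere_finite : ∀ (v : V) (n : ℕ), {w : V | G.dist v w = n}.Finite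

/-- The averaging operator `M_n`: average of `f` over the sphere of radius `n` around `v`. -/
noncomputable def Mop {qp qm : ℕ} {V : Type} (T : SemiHomTree qp qm V)
    (n : ℕ) (f : V → ℂ) (v : V) : ℂ :=
  (({w : V | T.G.dist v w = n}.ncard : ℂ))⁻¹ * ∑ᶠ w ∈ {w : V | T.G.dist v w = n}, f w

/-- The Laplace operator `μ₁`: the average of `f` over the neighbors of `v`. -/
noncomputable def lap {qp qm : ℕ} {V : Type} (T : SemiHomTree qp qm V)
    (f : V → ℂ) (v : V) : ℂ :=
  (((if T.eps v then qp else qm : ℕ) : ℂ) + 1)⁻¹ * ∑ᶠ w ∈ {w : V | T.G.Adj v w}, f w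

namespace SemiHomTree

variable {qp qm : ℕ} {V : Type} (T : SemiHomTree qp qm V)

lemma isTree' : T.G.IsTree := ⟨T.connected, T.acyclic⟩

lemma exists_parent (v0 v : V) (n : ℕ) (h : T.G.dist v0 v = n + 1) :
    ∃ u, T.G.Adj v u ∧ T.G.dist v0 u = n := by
  obtain ⟨p, hp⟩ := T.connected.exists_walk_length_eq_dist v v0
  rw [SimpleGraph.dist_comm, h] at hp
  cases p with
  | nil => simp at hp
  | cons hadj q =>
    rename_i u
    refine ⟨u, hadj, ?_⟩
    simp at hp
    have h1 := SimpleGraph.dist_le q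
    rw [SimpleGraph.dist_comm] at h1
    rcases T.isTree'.dist_eq_dist_add_one_of_adj v0 hadj with h2 | h2 <;> omega

lemma parent_unique (v0 v u w : V) (n : ℕ) (h : T.G.dist v0 v = n + 1)
    (hu : T.G.Adj v u) (hw : T.G.Adj v w) (du : T.G.dist v0 u = n)
    (dw : T.G.dist v0 w = n) : u = w := by
  obtain ⟨p, hp⟩ := T.connected.exists_walk_length_eq_dist v0 u
  obtain ⟨q, hq⟩ := T.connected.exists_walk_length_eq_dist v0 w
  have h1 : (p.concat hu.symm).IsPath :=
    SimpleGraph.Walk.isPath_of_length_eq_dist _ (by simp; omega)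
  have h2 : (q.concat hw.symm).IsPath :=
    SimpleGraph.Walk.isPath_of_length_eq_dist _ (by simp; omega)
  have h3 := T.acyclic.path_unique ⟨_, h1⟩ ⟨_, h2⟩
  have h4 := congrArg (fun x => x.1.penultimate) h3
  simpa using h4

lemma eps_dist (v0 : V) (hv0 : T.eps v0 = true) (n : ℕ) :
    ∀ v, T.G.dist v0 v = n → T.eps v = decide (n % 2 = 0) := by
  induction n with
  | zero =>
    intro v hv
    have : v0 = v := T.connected.dist_eq_zero_iff.1 hv
    subst this
    simpa using hv0
  | succ n ih =>
    intro v hv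
    obtain ⟨u, hu, du⟩ := T.exists_parent v0 v n hv
    rw [T.adj_parity hu.symm, ih u du]
    by_cases h : n % 2 = 0
    · simp [h]; omega
    · simp [h]; omega

lemma degree (v : V) :
    {w : V | T.G.Adj v w}.ncard = (if T.eps v then qp else qm) + 1 := by
  cases h : T.eps v
  · simpa using T.degree_minus v h
  · simpa using T.degree_plus v h

lemma finsum_const {s : Set V} (hs : s.Finite) (g : V → ℂ) (c : ℂ) (h : ∀ w ∈ s, g w = c) :
    ∑ᶠ w ∈ s, g w = s.ncard * c := by
  rw [finsum_mem_congr rfl h, finsum_mem_eq_finite_toFinset_sum _ hs, Finset.sum_const,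
    Set.ncard_eq_toFinset_card s hs, nsmul_eq_mul]

lemma sum_root (v0 : V) (hv0 : T.eps v0 = true) (F : ℕ → ℂ) :
    ∑ᶠ w ∈ {w : V | T.G.Adj v0 w}, F (T.G.dist v0 w) = (qp + 1) * F 1 := by
  rw [finsum_const (T.nbr_finite v0) _ (F 1), T.degree_plus v0 hv0]
  · push_cast; rfl
  · intro w hw
    rw [SimpleGraph.dist_eq_one_iff_adj.2 hw]

lemma sum_succ (v0 v : V) (n : ℕ) (h : T.G.dist v0 v = n + 1) (F : ℕ → ℂ) :
    ∑ᶠ w ∈ {w : V | T.G.Adj v w}, F (T.G.dist v0 w) =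
      F n + ((if T.eps v then qp else qm : ℕ) : ℂ) * F (n + 2) := by
  obtain ⟨u, hu, du⟩ := T.exists_parent v0 v n h
  have hfin := (T.nbr_finite v).sdiff (t := {u})
  have hins : insert u ({w : V | T.G.Adj v w} \ {u}) = {w : V | T.G.Adj v w} := by
    simp [Set.insert_eq_of_mem, hu]
  have hc : ({w : V | T.G.Adj v w} \ {u}).ncard = if T.eps v then qp else qm := by
    have := T.degree v
    rw [← hins, Set.ncard_insert_of_notMem (by simp) hfin] at this
    omega
  rw [← hins, finsum_mem_insert _ (by simp) hfin, finsum_const hfin _ (F (n + 2)), hc, du]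
  rintro w ⟨hw, hwu⟩
  rcases T.isTree'.dist_eq_dist_add_one_of_adj v0 hw with h2 | h2
  · exact absurd (T.parent_unique v0 v w u n h hw hu (by omega) du) hwu
  · rw [h2, h]

end SemiHomTree

/-- The branching number at distance `n` from the root. -/
def sphQ (qp qm n : ℕ) : ℕ := if n % 2 = 0 then qp else qm

/-- Profile of the spherical function. -/
noncomputable def sphF (qp qm : ℕ) (γ : ℂ) : ℕ → ℂ
  | 0 => 1
  | 1 => γ
  | n + 2 => ((sphQ qp qm (n + 1) + 1) * γ * sphF qp qm γ (n + 1) - sphF qp qm γ n)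
      / sphQ qp qm (n + 1)

theorem stmt_1 {qp qm : ℕ} (hqp : 2 ≤ qp) (hqm : 2 ≤ qm) {V : Type}
    (T : SemiHomTree qp qm V) (v0 : V) (hv0 : T.eps v0 = true)
    (γ : ℂ) :
    ∃! f : V → ℂ,
      (∃ F : ℕ → ℂ, ∀ v : V, f v = F (T.G.dist v0 v)) ∧
        (∀ v : V, lap T f v = γ * f v) ∧ f v0 = 1 := by
  have hq0 : ∀ n, (sphQ qp qm n : ℂ) ≠ 0 := by
    intro n
    unfold sphQ
    split_ifs <;> exact_mod_cast (by omega)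
  have hq1 : ∀ n : ℕ, (n : ℂ) + 1 ≠ 0 := fun n => Nat.cast_add_one_ne_zero n
  have hroot : ∀ F : ℕ → ℂ, lap T (fun v => F (T.G.dist v0 v)) v0 = F 1 := by
    intro F
    rw [lap, T.sum_root v0 hv0]
    simp only [hv0, if_true]
    rw [inv_mul_cancel_left₀ (hq1 qp)]
  have hsucc : ∀ (F : ℕ → ℂ) (n : ℕ) (v : V), T.G.dist v0 v = n + 1 →
      lap T (fun v => F (T.G.dist v0 v)) v =
        ((sphQ qp qm (n + 1) : ℂ) + 1)⁻¹ * (F n + sphQ qp qm (n + 1) * F (n + 2)) := by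
    intro F n v h
    have e : (if T.eps v then qp else qm) = sphQ qp qm (n + 1) := by
      rw [T.eps_dist v0 hv0 _ v h]; simp [sphQ]
    rw [lap, T.sum_succ v0 v n h, e]
  refine ⟨fun v => sphF qp qm γ (T.G.dist v0 v), ⟨⟨_, fun _ => rfl⟩, ?_, ?_⟩, ?_⟩
  · intro v
    rcases hd : T.G.dist v0 v with _ | n
    · have : v0 = v := T.connected.dist_eq_zero_iff.1 hd
      subst this
      rw [hroot]
      simp [sphF]
    · rw [hsucc _ n v hd]
      have := hq0 (n + 1)
      have := hq1 (sphQ qp qm (n + 1))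
      simp only [hd]
      rw [sphF]
      field_simp
      ring
  · simp [sphF]
  · rintro f ⟨⟨F, hF⟩, hl, h1⟩
    obtain rfl : f = fun v => F (T.G.dist v0 v) := funext hF
    have key : ∀ n, ∀ v, T.G.dist v0 v = n → F n = sphF qp qm γ n := by
      intro n
      induction n using Nat.strong_induction_on with
      | _ n ih =>
        intro v hv
        have e0 : F 0 = 1 := by simpa using h1
        match n, hv with
        | 0, _ => simpa [sphF] using e0
        | 1, _ =>
          have := hl v0
          rw [hroot] at this
          simpa [sphF, e0] using this
        | n + 2, hv =>
          obtain ⟨u, hu, du⟩ := T.exists_parent v0 v (n + 1) hv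
          obtain ⟨w, hw, dw⟩ := T.exists_parent v0 u n du
          have a := ih (n + 1) (by omega) u du
          have b := ih n (by omega) w dw
          have := hl u
          rw [hsucc _ n u du] at this
          simp only [du] at this
          rw [inv_mul_eq_iff_eq_mul₀ (hq1 _)] at this
          rw [sphF, eq_div_iff (hq0 _), ← a, ← b]
          linear_combination this
    funext v
    exact key _ v rfl
end

section
/- The function φ_0 is radial around v_0, satisfies φ_0(v_0) = 1 and μ_1 φ_0 = 0; moreover, every function f : V → ℂ that is radial around v_0 and satisfies μ_1 f = 0 vanishes at every vertex at odd distance from v_0 (that is, on V_−). -/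
open scoped BigOperators ComplexOrder

lemma SemiHomTree.dist_cases {qp qm : ℕ} {V : Type} (T : SemiHomTree qp qm V) (v0 : V)
    {v w : V} (h : T.G.Adj v w) :
    T.G.dist v0 v = T.G.dist v0 w + 1 ∨ T.G.dist v0 w = T.G.dist v0 v + 1 := by
  have ht : T.G.IsTree := ⟨T.connected, T.acyclic⟩
  have := ht.dist_eq_dist_add_one_of_adj v0 h
  tauto

lemma SemiHomTree.parent_unique_s2 {qp qm : ℕ} {V : Type} (T : SemiHomTree qp qm V) (v0 : V)
    {v w w' : V} (h : T.G.Adj v w) (h' : T.G.Adj v w')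
    (hd : T.G.dist v0 v = T.G.dist v0 w + 1) (hd' : T.G.dist v0 v = T.G.dist v0 w' + 1) :
    w = w' := by
  obtain ⟨p, hp⟩ := T.connected.exists_walk_length_eq_dist v0 w
  obtain ⟨p', hp'⟩ := T.connected.exists_walk_length_eq_dist v0 w'
  have h1 : (p.concat h.symm).IsPath :=
    SimpleGraph.Walk.isPath_of_length_eq_dist _ (by simp [hp, hd])
  have h2 : (p'.concat h'.symm).IsPath :=
    SimpleGraph.Walk.isPath_of_length_eq_dist _ (by simp [hp', hd'])
  have h3 := congrArg Subtype.val
    (T.acyclic.path_unique (⟨_, h1⟩ : T.G.Path v0 v) ⟨_, h2⟩)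
  have h4 := congrArg SimpleGraph.Walk.penultimate h3
  simpa using h4

lemma SemiHomTree.parent_exists {qp qm : ℕ} {V : Type} (T : SemiHomTree qp qm V) (v0 : V)
    {v : V} {n : ℕ} (hn : T.G.dist v0 v = n + 1) :
    ∃ w, T.G.Adj v w ∧ T.G.dist v0 w = n := by
  obtain ⟨p, hp⟩ := T.connected.exists_walk_length_eq_dist v0 v
  have hnil : ¬ p.Nil := by
    intro h
    have := SimpleGraph.Walk.nil_iff_length_eq.mp h
    omega
  have hadj := p.adj_penultimate hnil
  refine ⟨_, hadj.symm, ?_⟩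
  have h1 := SimpleGraph.dist_le p.dropLast
  have h2 : p.dropLast.length + 1 = p.length := by
    have := SimpleGraph.Walk.length_dropLast_add_one hnil
    exact this
  have := T.dist_cases v0 hadj
  omega

lemma SemiHomTree.eps_dist_s2 {qp qm : ℕ} {V : Type} (T : SemiHomTree qp qm V) (v0 : V)
    (hv0 : T.eps v0 = true) (n : ℕ) : ∀ v, T.G.dist v0 v = n → T.eps v = decide (Even n) := by
  induction n with
  | zero =>
    intro v hv
    have : v0 = v := T.connected.dist_eq_zero_iff.mp hv
    subst this
    simpa using hv0
  | succ n ih =>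
    intro v hv
    obtain ⟨w, hw, hd⟩ := T.parent_exists v0 hv
    rw [T.adj_parity hw.symm, ih w hd]
    by_cases he : Even n <;> simp only [Nat.even_add_one, he] <;> decide

lemma SemiHomTree.ncard_nbr {qp qm : ℕ} {V : Type} (T : SemiHomTree qp qm V) (v : V) :
    {w : V | T.G.Adj v w}.ncard = (if T.eps v then qp else qm) + 1 := by
  cases h : T.eps v
  · simpa using T.degree_minus v h
  · simpa using T.degree_plus v h

lemma SemiHomTree.lap_zero_iff {qp qm : ℕ} {V : Type} (T : SemiHomTree qp qm V)
    (f : V → ℂ) (v : V) : lap T f v = 0 ↔ ∑ᶠ w ∈ {w : V | T.G.Adj v w}, f w = 0 := by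
  have : (((if T.eps v then qp else qm : ℕ) : ℂ) + 1) ≠ 0 := Nat.cast_add_one_ne_zero _
  unfold lap
  rw [mul_eq_zero]
  simp only [inv_eq_zero, this, false_or]

lemma finsum_mem_const_of {V : Type} (s : Set V) (hs : s.Finite) (f : V → ℂ) (c : ℂ)
    (h : ∀ w ∈ s, f w = c) : ∑ᶠ w ∈ s, f w = s.ncard * c := by
  rw [finsum_mem_eq_finite_toFinset_sum f hs, Finset.sum_congr rfl (g := fun _ => c)]
  · simp [Set.ncard_eq_toFinset_card s hs]
  · intro w hw
    exact h w (by simpa using hw)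

lemma SemiHomTree.sum_root_s2 {qp qm : ℕ} {V : Type} (T : SemiHomTree qp qm V) (v0 : V)
    (hv0 : T.eps v0 = true) (f : V → ℂ) (F : ℕ → ℂ) (hf : ∀ v, f v = F (T.G.dist v0 v)) :
    ∑ᶠ w ∈ {w : V | T.G.Adj v0 w}, f w = ((qp : ℂ) + 1) * F 1 := by
  rw [finsum_mem_const_of _ (T.nbr_finite v0) f (F 1), T.degree_plus v0 hv0]
  · push_cast; ring
  · intro w hw
    rw [hf, SimpleGraph.dist_eq_one_iff_adj.mpr hw]

lemma SemiHomTree.sum_nbr {qp qm : ℕ} {V : Type} (T : SemiHomTree qp qm V) (v0 : V)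
    (f : V → ℂ) (F : ℕ → ℂ) (hf : ∀ v, f v = F (T.G.dist v0 v)) (v : V) (n : ℕ)
    (hn : T.G.dist v0 v = n + 1) :
    ∑ᶠ w ∈ {w : V | T.G.Adj v w}, f w =
      F n + ((if T.eps v then qp else qm : ℕ) : ℂ) * F (n + 2) := by
  obtain ⟨p, hp, hd⟩ := T.parent_exists v0 hn
  have hins : {w : V | T.G.Adj v w} = insert p ({w : V | T.G.Adj v w} \ {p}) := by
    rw [Set.insert_diff_singleton, Set.insert_eq_of_mem]
    exact hp
  have hfin : ({w : V | T.G.Adj v w} \ {p}).Finite := (T.nbr_finite v).diff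
  have hcard : ({w : V | T.G.Adj v w} \ {p}).ncard = if T.eps v then qp else qm := by
    have h1 := Set.ncard_diff_singleton_add_one (s := {w : V | T.G.Adj v w}) hp (T.nbr_finite v)
    rw [T.ncard_nbr] at h1
    omega
  rw [hins, finsum_mem_insert f (by simp) hfin,
    finsum_mem_const_of _ hfin f (F (n + 2)), hcard, hf p, hd]
  rintro w ⟨hw, hne⟩
  rw [hf]
  rcases T.dist_cases v0 hw with h | h
  · exact absurd (T.parent_unique_s2 v0 hw hp h (by omega)) hne
  · rw [h, hn]

theorem stmt_2 {qp qm : ℕ} (hqp : 2 ≤ qp) (hqm : 2 ≤ qm) {V : Type}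
    (T : SemiHomTree qp qm V) (v0 : V) (hv0 : T.eps v0 = true)
    (φ0 : V → ℂ)
    (hφ0 : ∀ v : V, φ0 v =
      if Even (T.G.dist v0 v)
        then (-1 : ℂ) ^ (T.G.dist v0 v / 2) * ((qm : ℂ) ^ (T.G.dist v0 v / 2))⁻¹
        else 0) :
    (∃ F : ℕ → ℂ, ∀ v : V, φ0 v = F (T.G.dist v0 v)) ∧
      φ0 v0 = 1 ∧
      (∀ v : V, lap T φ0 v = 0) ∧
      ∀ (f : V → ℂ) (F : ℕ → ℂ), (∀ v : V, f v = F (T.G.dist v0 v)) →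
        (∀ v : V, lap T f v = 0) → ∀ v : V, Odd (T.G.dist v0 v) → f v = 0 := by
  refine ⟨⟨fun n => if Even n then (-1 : ℂ) ^ (n / 2) * ((qm : ℂ) ^ (n / 2))⁻¹ else 0, hφ0⟩,
    by simp [hφ0], ?_, ?_⟩
  · intro v
    rw [T.lap_zero_iff]
    rcases hd : T.G.dist v0 v with _ | n
    · have : v0 = v := T.connected.dist_eq_zero_iff.mp hd
      subst this
      rw [T.sum_root_s2 v0 hv0 φ0 (fun n => if Even n then (-1 : ℂ) ^ (n / 2) *
        ((qm : ℂ) ^ (n / 2))⁻¹ else 0) hφ0]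
      simp
    · rw [T.sum_nbr v0 φ0 (fun n => if Even n then (-1 : ℂ) ^ (n / 2) *
        ((qm : ℂ) ^ (n / 2))⁻¹ else 0) hφ0 v n hd, T.eps_dist_s2 v0 hv0 _ v hd]
      have hq : (qm : ℂ) ≠ 0 := by
        have : qm ≠ 0 := by omega
        exact_mod_cast this
      by_cases he : Even n
      · have h2 : (n + 2) / 2 = n / 2 + 1 := by omega
        simp only [Nat.even_add_one, he, h2, not_true_eq_false, decide_false, if_true,
          not_false_eq_true, pow_succ, Bool.false_eq_true, if_false]
        field_simp
        ring
      · simp [Nat.even_add_one, he]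
  · intro f F hf hlap
    have key : ∀ n : ℕ, Even n → ∀ v, T.G.dist v0 v = n + 1 → f v = 0 := by
      intro n
      induction n using Nat.strong_induction_on with
      | _ n ih =>
        intro he v hv
        obtain ⟨u, hu, hud⟩ := T.parent_exists v0 hv
        have hs := (T.lap_zero_iff f u).mp (hlap u)
        rw [hf, hv]
        rcases n with _ | n
        · have : v0 = u := T.connected.dist_eq_zero_iff.mp hud
          subst this
          rw [T.sum_root_s2 v0 hv0 f F hf] at hs
          exact (mul_eq_zero.mp hs).resolve_left (Nat.cast_add_one_ne_zero qp)
        · rw [T.sum_nbr v0 f F hf u n hud, T.eps_dist_s2 v0 hv0 _ u hud] at hs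
          obtain ⟨p, hp, hpd⟩ := T.parent_exists v0 hud
          have hF : F n = 0 := by
            rw [← hpd, ← hf]
            rcases n with _ | m
            · simp at he
            · refine ih m (by omega) ?_ p hpd
              rw [Nat.even_iff] at he ⊢
              omega
          have hq : (qp : ℂ) ≠ 0 := by
            have : qp ≠ 0 := by omega
            exact_mod_cast this
          simp only [he, decide_true, if_true, hF, zero_add] at hs
          exact (mul_eq_zero.mp hs).resolve_left hq
    intro v hv
    obtain ⟨k, hk⟩ := hv
    exact key (2 * k) (even_two_mul k) v hk
end

section
/- Let f : V → ℂ, let v ∈ V_+ (so v has q_+ + 1 neighbors), and let n ≥ 1. Set q' = q_+ if n is even and q' = q_- if n is odd. Then M_n(M_1 f)(v) = (1/(q'+1))·M_{n−1} f(v) + (q'/(q'+1))·M_{n+1} f(v). -/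
open scoped BigOperators ComplexOrder

namespace SemiHomTree

variable {qp qm : ℕ} {V : Type}

/-- sphere as a finset -/
noncomputable def S (T : SemiHomTree qp qm V) (v : V) (n : ℕ) : Finset V :=
  (T.sphere_finite v n).toFinset

/-- neighbours as a finset -/
noncomputable def Nb (T : SemiHomTree qp qm V) (v : V) : Finset V :=
  (T.nbr_finite v).toFinset

/-- branching number at a given level, seen from a plus vertex -/
def br (qp qm n : ℕ) : ℕ := if n % 2 = 0 then qp else qm

/-- number of successors at level n -/
def cc (qp qm n : ℕ) : ℕ := if n = 0 then qp + 1 else br qp qm n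

theorem mem_S (T : SemiHomTree qp qm V) (v w : V) (n : ℕ) :
    w ∈ T.S v n ↔ T.G.dist v w = n := by simp [S]

theorem mem_Nb (T : SemiHomTree qp qm V) (v w : V) :
    w ∈ T.Nb v ↔ T.G.Adj v w := by simp [Nb]

theorem parity_walk (T : SemiHomTree qp qm V) {v w : V} (p : T.G.Walk v w) :
    T.eps w = if p.length % 2 = 0 then T.eps v else !T.eps v := by
  induction p with
  | nil => simp
  | cons h p ih =>
    rw [ih, T.adj_parity h, SimpleGraph.Walk.length_cons]
    rcases Nat.mod_two_eq_zero_or_one p.length with h0 | h0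
    · have : (p.length + 1) % 2 = 1 := by omega
      simp [h0, this]
    · have : (p.length + 1) % 2 = 0 := by omega
      simp [h0, this]

theorem parity_dist (T : SemiHomTree qp qm V) (v w : V) :
    T.eps w = if T.G.dist v w % 2 = 0 then T.eps v else !T.eps v := by
  obtain ⟨p, hp⟩ := T.connected.exists_walk_length_eq_dist v w
  rw [← hp]; exact T.parity_walk p

theorem card_Nb (T : SemiHomTree qp qm V) {v w : V} {n : ℕ} (hv : T.eps v = true)
    (hw : T.G.dist v w = n) : (T.Nb w).card = br qp qm n + 1 := by
  have h := T.parity_dist v w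
  rw [Nb, ← Set.ncard_eq_toFinset_card _ (T.nbr_finite w)]
  unfold br
  rw [hw, hv] at h
  split_ifs at h ⊢ with h0
  · exact T.degree_plus w h
  · exact T.degree_minus w (by simpa using h)

theorem dist_adj (T : SemiHomTree qp qm V) (v : V) {u w : V} (h : T.G.Adj u w) :
    T.G.dist v w = T.G.dist v u + 1 ∨ T.G.dist v u = T.G.dist v w + 1 := by
  have h1 := T.parity_dist v u
  have h2 := T.parity_dist v w
  have h3 := T.adj_parity h
  have hd : T.G.dist u w = 1 := SimpleGraph.dist_eq_one_iff_adj.2 h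
  have hd' : T.G.dist w u = 1 := SimpleGraph.dist_eq_one_iff_adj.2 h.symm
  have a := T.connected.dist_triangle (u := v) (v := u) (w := w)
  have b := T.connected.dist_triangle (u := v) (v := w) (w := u)
  have hne : T.G.dist v u ≠ T.G.dist v w := by
    intro he
    rw [he] at h1
    rw [← h2] at h1
    rw [h1] at h3
    cases hh : T.eps w <;> simp [hh] at h3
  omega

theorem pred_unique (T : SemiHomTree qp qm V) (v : V) {u w w' : V} (h : T.G.Adj u w)
    (h' : T.G.Adj u w') (hd : T.G.dist v u = T.G.dist v w + 1)
    (hd' : T.G.dist v u = T.G.dist v w' + 1) : w = w' := by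
  have key : ∀ x, T.G.Adj u x → T.G.dist v u = T.G.dist v x + 1 →
      ∃ p : T.G.Walk x v, ∃ hx : T.G.Adj u x, (SimpleGraph.Walk.cons hx p).IsPath := by
    intro x hx hdx
    obtain ⟨p, hp, hl⟩ := T.connected.exists_path_of_dist x v
    refine ⟨p, hx, ?_⟩
    apply SimpleGraph.Walk.isPath_of_length_eq_dist
    rw [SimpleGraph.Walk.length_cons, hl, T.G.dist_comm, ← hdx, T.G.dist_comm]
  obtain ⟨p, hx, hp⟩ := key w h hd
  obtain ⟨p', hx', hp'⟩ := key w' h' hd'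
  have := T.acyclic.path_unique ⟨_, hp⟩ ⟨_, hp'⟩
  have := congrArg (fun q : T.G.Path u v => q.1.snd) this
  simpa using this

theorem pred_exists (T : SemiHomTree qp qm V) (v : V) {u : V} {n : ℕ}
    (hd : T.G.dist v u = n + 1) : ∃ w, T.G.Adj u w ∧ T.G.dist v w = n := by
  obtain ⟨p, hp⟩ := T.connected.exists_walk_length_eq_dist u v
  rw [T.G.dist_comm, hd] at hp
  cases p with
  | nil => simp at hp
  | cons h p =>
    refine ⟨_, h, ?_⟩
    rw [SimpleGraph.Walk.length_cons] at hp
    have h1 := SimpleGraph.dist_le p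
    rw [T.G.dist_comm] at h1
    have := T.dist_adj v h
    omega

open Classical in
theorem pred_card (T : SemiHomTree qp qm V) (v : V) {u : V} {n : ℕ}
    (hd : T.G.dist v u = n + 1) : ((T.Nb u).filter (fun w => T.G.dist v w = n)).card = 1 := by
  obtain ⟨w, hw, hn⟩ := T.pred_exists v hd
  rw [Finset.card_eq_one]
  refine ⟨w, ?_⟩
  ext x
  simp only [Finset.mem_filter, mem_Nb, Finset.mem_singleton]
  constructor
  · rintro ⟨a, b⟩
    exact T.pred_unique v a hw (by omega) (by omega)
  · rintro rfl; exact ⟨hw, hn⟩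

open Classical in
theorem succ_card (T : SemiHomTree qp qm V) {v u : V} {n : ℕ} (hv : T.eps v = true)
    (hd : T.G.dist v u = n) :
    ((T.Nb u).filter (fun w => T.G.dist v w = n + 1)).card = cc qp qm n := by
  have hc := T.card_Nb hv hd
  rcases n with _ | n
  · rw [Finset.filter_true_of_mem, hc]
    · simp [cc, br]
    · intro w hw
      rw [mem_Nb] at hw
      have := T.dist_adj v hw
      omega
  · have h1 := T.pred_card v hd
    have h2 := Finset.card_filter_add_card_filter_not (s := T.Nb u) (fun w => T.G.dist v w = n)
    have h3 : (T.Nb u).filter (fun w => ¬ T.G.dist v w = n)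
        = (T.Nb u).filter (fun w => T.G.dist v w = n + 1 + 1) := by
      apply Finset.filter_congr
      intro w hw
      rw [mem_Nb] at hw
      have := T.dist_adj v hw
      omega
    rw [h3] at h2
    simp only [cc]
    simp
    omega

open Classical in
theorem sum_up (T : SemiHomTree qp qm V) (v : V) (n : ℕ) (g : V → ℂ) :
    ∑ u ∈ T.S v n, ∑ w ∈ (T.Nb u).filter (fun w => T.G.dist v w = n + 1), g w
      = ∑ w ∈ T.S v (n + 1), g w := by
  rw [Finset.sum_comm' (t' := T.S v (n + 1))
    (s' := fun w => (T.Nb w).filter (fun u => T.G.dist v u = n))]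
  · apply Finset.sum_congr rfl
    intro w hw
    rw [Finset.sum_const, T.pred_card v ((T.mem_S _ _ _).1 hw), one_smul]
  · intro u w
    simp only [Finset.mem_filter, mem_Nb, mem_S, T.G.adj_comm u w]
    tauto

open Classical in
theorem sum_down (T : SemiHomTree qp qm V) {v : V} (hv : T.eps v = true) (n : ℕ) (g : V → ℂ) :
    ∑ u ∈ T.S v (n + 1), ∑ w ∈ (T.Nb u).filter (fun w => T.G.dist v w = n), g w
      = (cc qp qm n : ℂ) * ∑ w ∈ T.S v n, g w := by
  rw [Finset.sum_comm' (t' := T.S v n)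
    (s' := fun w => (T.Nb w).filter (fun u => T.G.dist v u = n + 1))]
  · rw [Finset.mul_sum]
    apply Finset.sum_congr rfl
    intro w hw
    rw [Finset.sum_const, T.succ_card hv ((T.mem_S _ _ _).1 hw), nsmul_eq_mul]
  · intro u w
    simp only [Finset.mem_filter, mem_Nb, mem_S, T.G.adj_comm u w]
    tauto

theorem card_succ (T : SemiHomTree qp qm V) {v : V} (hv : T.eps v = true) (n : ℕ) :
    ((T.S v (n + 1)).card : ℂ) = cc qp qm n * (T.S v n).card := by
  classical
  have h := T.sum_down hv n (fun _ => 1)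
  have h2 : ∀ u ∈ T.S v (n + 1),
      ∑ w ∈ (T.Nb u).filter (fun w => T.G.dist v w = n), (1 : ℂ) = 1 := by
    intro u hu
    rw [Finset.sum_const, T.pred_card v ((T.mem_S _ _ _).1 hu), one_smul]
  rw [Finset.sum_congr rfl h2] at h
  simpa using h

theorem card_zero (T : SemiHomTree qp qm V) (v : V) : (T.S v 0).card = 1 := by
  rw [Finset.card_eq_one]
  refine ⟨v, ?_⟩
  ext w
  rw [mem_S, T.connected.dist_eq_zero_iff, Finset.mem_singleton, eq_comm]

theorem Mop_eq (T : SemiHomTree qp qm V) (n : ℕ) (f : V → ℂ) (v : V) :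
    Mop T n f v = ((T.S v n).card : ℂ)⁻¹ * ∑ w ∈ T.S v n, f w := by
  unfold Mop
  rw [finsum_mem_eq_finite_toFinset_sum _ (T.sphere_finite v n),
    Set.ncard_eq_toFinset_card _ (T.sphere_finite v n)]
  rfl

theorem S_one (T : SemiHomTree qp qm V) (u : V) : T.S u 1 = T.Nb u := by
  ext w
  rw [mem_S, mem_Nb, SimpleGraph.dist_eq_one_iff_adj]

theorem sum_Nb (T : SemiHomTree qp qm V) {v u : V} {n : ℕ} (hd : T.G.dist v u = n + 1)
    (f : V → ℂ) [DecidablePred fun w => T.G.dist v w = n]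
    [DecidablePred fun w => T.G.dist v w = n + 1 + 1] :
    ∑ w ∈ T.Nb u, f w = ∑ w ∈ (T.Nb u).filter (fun w => T.G.dist v w = n), f w
      + ∑ w ∈ (T.Nb u).filter (fun w => T.G.dist v w = n + 1 + 1), f w := by
  rw [← Finset.sum_filter_add_sum_filter_not (T.Nb u) (fun w => T.G.dist v w = n)]
  congr 1
  apply Finset.sum_congr _ (fun _ _ => rfl)
  apply Finset.filter_congr
  intro w hw
  rw [mem_Nb] at hw
  have := T.dist_adj v hw
  omega

end SemiHomTree

open SemiHomTree in
theorem stmt_7 {qp qm : ℕ} (hqp : 2 ≤ qp) (hqm : 2 ≤ qm) {V : Type}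
    (T : SemiHomTree qp qm V) (v0 : V) (hv0 : T.eps v0 = true)
    (f : V → ℂ) (v : V) (hv : T.eps v = true) (n : ℕ) (hn : 1 ≤ n) :
    Mop T n (fun u => Mop T 1 f u) v =
      (((if n % 2 = 0 then qp else qm : ℕ) : ℂ) + 1)⁻¹ * Mop T (n - 1) f v +
        (((if n % 2 = 0 then qp else qm : ℕ) : ℂ) /
            (((if n % 2 = 0 then qp else qm : ℕ) : ℂ) + 1)) * Mop T (n + 1) f v := by
  classical
  obtain ⟨m, rfl⟩ : ∃ m, n = m + 1 := ⟨n - 1, by omega⟩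
  change _ = ((br qp qm (m + 1) : ℂ) + 1)⁻¹ * Mop T (m + 1 - 1) f v +
    ((br qp qm (m + 1) : ℂ) / ((br qp qm (m + 1) : ℂ) + 1)) * Mop T (m + 1 + 1) f v
  have hbr : ∀ k, (br qp qm k : ℂ) ≠ 0 := by
    intro k
    unfold br
    split_ifs <;> norm_cast <;> omega
  have hcc : ∀ k, (cc qp qm k : ℂ) ≠ 0 := by
    intro k
    unfold cc
    split_ifs
    · norm_cast
    · exact hbr k
  have hcard : ∀ k, ((T.S v k).card : ℂ) ≠ 0 := by
    intro k
    induction k with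
    | zero => simp [T.card_zero]
    | succ k ih => rw [T.card_succ hv]; exact mul_ne_zero (hcc k) ih
  have hb1 : (br qp qm (m + 1) : ℂ) + 1 ≠ 0 := by norm_cast
  have hinner : ∀ u ∈ T.S v (m + 1), Mop T 1 f u = ((br qp qm (m + 1) : ℂ) + 1)⁻¹ *
      (∑ w ∈ (T.Nb u).filter (fun w => T.G.dist v w = m), f w
      + ∑ w ∈ (T.Nb u).filter (fun w => T.G.dist v w = m + 1 + 1), f w) := by
    intro u hu
    rw [mem_S] at hu
    rw [T.Mop_eq, T.S_one, T.card_Nb hv hu, ← T.sum_Nb hu]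
    push_cast
    rfl
  rw [T.Mop_eq, T.Mop_eq, T.Mop_eq, Finset.sum_congr rfl hinner, ← Finset.mul_sum,
    Finset.sum_add_distrib, T.sum_up v (m + 1) f, T.sum_down hv m f,
    T.card_succ hv (m + 1), T.card_succ hv m, Nat.add_sub_cancel]
  have e : cc qp qm (m + 1) = br qp qm (m + 1) := by simp [cc]
  rw [e]
  have h1 := hcc m
  have h2 := hcard m
  have h3 := hbr (m + 1)
  field_simp
end

section
/- Let F : ℕ → ℂ be finitely supported and g : V_+ → ℂ finitely supported. Define (F★g)(v) = Σ_{w ∈ V_+} F(dist(v,w))·g(w) for v ∈ V_+, and the radialization (E g)(v) = (1/#(C(|v|) ∩ V_+))·Σ_{u ∈ V_+, |u| = |v|} g(u). Then E(F★g) = F★(E g) as functions on V_+. -/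
open scoped BigOperators ComplexOrder

/-- Convolution of a finitely supported profile `F` with a function `g`, over `V_+`. -/
noncomputable def convF {qp qm : ℕ} {V : Type} (T : SemiHomTree qp qm V)
    (F : ℕ → ℂ) (g : V → ℂ) (v : V) : ℂ :=
  ∑ᶠ w ∈ {w : V | T.eps w = true}, F (T.G.dist v w) * g w

/-- Radialization around `v0`, over `V_+`. -/
noncomputable def radE {qp qm : ℕ} {V : Type} (T : SemiHomTree qp qm V)
    (v0 : V) (g : V → ℂ) (v : V) : ℂ :=
  (({u : V | T.eps u = true ∧ T.G.dist v0 u = T.G.dist v0 v}.ncard : ℂ))⁻¹ *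
    ∑ᶠ u ∈ {u : V | T.eps u = true ∧ T.G.dist v0 u = T.G.dist v0 v}, g u

namespace SemiHomTree

variable {qp qm : ℕ} {V : Type} (T : SemiHomTree qp qm V)

/-- neighbours as a finset -/
noncomputable def nb (w : V) : Finset V := (T.nbr_finite w).toFinset

/-- sphere as a finset -/
noncomputable def sph (v : V) (n : ℕ) : Finset V := (T.sphere_finite v n).toFinset

lemma mem_nb {w x : V} : x ∈ T.nb w ↔ T.G.Adj w x := by simp [nb]

lemma mem_sph {v x : V} {n : ℕ} : x ∈ T.sph v n ↔ T.G.dist v x = n := by simp [sph]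

lemma adj_dist (u : V) {v w : V} (h : T.G.Adj v w) :
    T.G.dist u v = T.G.dist u w + 1 ∨ T.G.dist u w = T.G.dist u v + 1 :=
  T.acyclic.dist_eq_dist_add_one_of_adj_of_reachable u h (T.connected u v)

lemma walk_parity {u w : V} (p : T.G.Walk u w) :
    T.eps w = if Even p.length then T.eps u else !T.eps u := by
  induction p with
  | nil => simp
  | cons h p ih =>
    rw [ih, T.adj_parity h, SimpleGraph.Walk.length_cons]
    by_cases hp : Even p.length
    · have : ¬ Even (p.length + 1) := by simpa [Nat.even_add_one] using hp
      simp [hp, this]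
    · have : Even (p.length + 1) := by simpa [Nat.even_add_one] using hp
      simp [hp, this]

lemma dist_parity (u : V) {v w : V} (h : T.G.dist u v = T.G.dist u w) : T.eps v = T.eps w := by
  obtain ⟨p, hp⟩ := T.connected.exists_walk_length_eq_dist u v
  obtain ⟨q, hq⟩ := T.connected.exists_walk_length_eq_dist u w
  rw [T.walk_parity p, T.walk_parity q, hp, hq, h]

lemma card_nb (w : V) : (T.nb w).card = if T.eps w = true then qp + 1 else qm + 1 := by
  rw [nb, ← Set.ncard_eq_toFinset_card _ (T.nbr_finite w)]
  split_ifs with h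
  · exact T.degree_plus w h
  · exact T.degree_minus w (by simpa using h)

lemma closer_unique {u w x y : V} {n : ℕ} (hw : T.G.dist u w = n + 1)
    (hx : T.G.Adj w x) (hy : T.G.Adj w y) (dx : T.G.dist u x = n) (dy : T.G.dist u y = n) :
    x = y := by
  obtain ⟨p, hp⟩ := T.connected.exists_walk_length_eq_dist u x
  obtain ⟨q, hq⟩ := T.connected.exists_walk_length_eq_dist u y
  have h1 : (p.concat hx.symm).IsPath :=
    SimpleGraph.Walk.isPath_of_length_eq_dist _ (by simp [hp, dx, hw])
  have h2 : (q.concat hy.symm).IsPath :=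
    SimpleGraph.Walk.isPath_of_length_eq_dist _ (by simp [hq, dy, hw])
  have h3 := congrArg Subtype.val (T.acyclic.path_unique ⟨_, h1⟩ ⟨_, h2⟩)
  have h4 := congrArg SimpleGraph.Walk.penultimate h3
  simpa using h4

lemma closer_exists {u w : V} {n : ℕ} (hw : T.G.dist u w = n + 1) :
    ∃ x, T.G.Adj w x ∧ T.G.dist u x = n := by
  obtain ⟨p, hp⟩ := T.connected.exists_walk_length_eq_dist w u
  rw [SimpleGraph.dist_comm, hw] at hp
  cases p with
  | nil => simp at hp
  | cons h p =>
    rename_i x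
    refine ⟨x, h, ?_⟩
    have h1 := SimpleGraph.dist_le p
    rw [SimpleGraph.dist_comm] at h1
    simp at hp
    have := T.adj_dist u h
    omega

lemma sum_nb (u w : V) (h : ℕ → ℂ) :
    ∑ x ∈ T.nb w, h (T.G.dist u x) =
      if T.G.dist u w = 0 then ((T.nb w).card : ℂ) * h 1
      else h (T.G.dist u w - 1) + ((T.nb w).card - 1 : ℂ) * h (T.G.dist u w + 1) := by
  classical
  split_ifs with h0
  · rw [Finset.sum_congr rfl (g := fun _ => h 1), Finset.sum_const, nsmul_eq_mul]
    intro x hx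
    have := T.adj_dist u (T.mem_nb.1 hx)
    congr 1
    omega
  · obtain ⟨n, hn⟩ := Nat.exists_eq_succ_of_ne_zero h0
    obtain ⟨y, hy, dy⟩ := T.closer_exists hn
    have hy' := T.mem_nb.2 hy
    rw [← Finset.add_sum_erase _ _ hy', dy, hn,
      Finset.sum_congr rfl (g := fun _ => h (n + 1 + 1)), Finset.sum_const, nsmul_eq_mul,
      Finset.card_erase_of_mem hy', Nat.cast_sub (Finset.card_pos.2 ⟨y, hy'⟩)]
    · simp
    · intro x hx
      rw [Finset.mem_erase, T.mem_nb] at hx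
      have h1 := T.adj_dist u hx.2
      have h2 : T.G.dist u x ≠ n := fun h2 => hx.1 (T.closer_unique hn hx.2 hy h2 dy)
      congr 1
      omega

/-- functions of the distance from `v0` -/
def Rad (v0 : V) (f : V → ℂ) : Prop := ∀ x y, T.G.dist v0 x = T.G.dist v0 y → f x = f y

lemma Rad.sum_nb {v0 : V} {f : V → ℂ} (hf : T.Rad v0 f) :
    T.Rad v0 (fun w => ∑ x ∈ T.nb w, f x) := by
  obtain ⟨h, hh⟩ : ∃ h : ℕ → ℂ, ∀ x, f x = h (T.G.dist v0 x) := by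
    classical
    refine ⟨fun n => if hn : ∃ x, T.G.dist v0 x = n then f hn.choose else 0, fun x => ?_⟩
    have hx : ∃ y, T.G.dist v0 y = T.G.dist v0 x := ⟨x, rfl⟩
    simp only [hx, dif_pos]
    exact hf _ _ hx.choose_spec.symm
  intro x y hxy
  simp only [hh, T.sum_nb, hxy, T.card_nb, T.dist_parity v0 hxy]

/-- number of points at distance `k` from `w` in the sphere of radius `m` -/
noncomputable def cnt (v0 : V) (m k : ℕ) (w : V) : ℂ :=
  ∑ u ∈ T.sph v0 m, if T.G.dist u w = k then 1 else 0

lemma cnt_rec (v0 : V) (m k : ℕ) (w : V) :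
    T.cnt v0 m (k + 1) w = ∑ x ∈ T.nb w, T.cnt v0 m k x -
      if k = 0 then 0 else
        (if k = 1 then ((T.nb w).card : ℂ) else ((T.nb w).card - 1 : ℂ)) * T.cnt v0 m (k - 1) w := by
  have key : ∀ u, (∑ x ∈ T.nb w, if T.G.dist u x = k then (1 : ℂ) else 0) -
      (if k = 0 then 0 else
        (if k = 1 then ((T.nb w).card : ℂ) else ((T.nb w).card - 1 : ℂ)) *
          (if T.G.dist u w = k - 1 then (1 : ℂ) else 0)) =
      if T.G.dist u w = k + 1 then (1 : ℂ) else 0 := by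
    intro u
    rw [T.sum_nb u w (fun d => if d = k then (1 : ℂ) else 0)]
    generalize T.G.dist u w = d
    generalize ((T.nb w).card : ℂ) = c
    rcases k with _ | _ | k
    · rcases d with _ | _ | d <;> simp
    · rcases d with _ | d
      · simp
      · simp
    · rcases d with _ | d
      · simp
      · have e1 : d = k + 1 + 1 ↔ d + 1 = k + 1 + 1 + 1 := by omega
        have e2 : d + 1 + 1 = k + 1 + 1 ↔ d + 1 = k + 1 := by omega
        simp only [Nat.add_sub_cancel, e1, e2]
        simp
  unfold cnt
  rw [Finset.sum_comm, ← Finset.sum_congr rfl (fun u _ => key u), Finset.sum_sub_distrib]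
  congr 1
  split_ifs <;> simp only [Finset.mul_sum, Finset.sum_const_zero]

lemma cnt_rad (v0 : V) (m k : ℕ) : T.Rad v0 (T.cnt v0 m k) := by
  induction k using Nat.strong_induction_on with
  | _ k ih =>
    intro x y hxy
    rcases k with _ | k
    · have : ∀ w, T.cnt v0 m 0 w = if T.G.dist v0 w = m then 1 else 0 := by
        intro w
        classical
        simp only [cnt, T.connected.dist_eq_zero_iff]
        rw [Finset.sum_ite_eq']
        simp only [T.mem_sph]
      rw [this, this, hxy]
    · rw [T.cnt_rec, T.cnt_rec, T.card_nb, T.card_nb, T.dist_parity v0 hxy]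
      have h1 := Rad.sum_nb T (ih k (by omega)) x y hxy
      have h2 := ih (k - 1) (by omega) x y hxy
      simp only at h1
      rw [h1, h2]

lemma sum_rad (v0 : V) (m : ℕ) (F : ℕ → ℂ) :
    T.Rad v0 (fun w => ∑ u ∈ T.sph v0 m, F (T.G.dist u w)) := by
  intro x y hxy
  have key : ∀ w, T.G.dist v0 w = T.G.dist v0 y → ∑ u ∈ T.sph v0 m, F (T.G.dist u w) =
      ∑ k ∈ Finset.range (m + T.G.dist v0 y + 1), F k * T.cnt v0 m k w := by
    intro w hw
    simp only [cnt, Finset.mul_sum]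
    rw [Finset.sum_comm]
    refine Finset.sum_congr rfl fun u hu => ?_
    have h1 := T.connected.dist_triangle (u := u) (v := v0) (w := w)
    rw [T.mem_sph, SimpleGraph.dist_comm] at hu
    simp
    intro h
    omega
  simp only
  rw [key x hxy, key y rfl]
  exact Finset.sum_congr rfl fun k _ => by rw [T.cnt_rad v0 m k x y hxy]

lemma avg_symm (v0 v w : V) (F : ℕ → ℂ) :
    ((T.sph v0 (T.G.dist v0 v)).card : ℂ)⁻¹ *
        ∑ u ∈ T.sph v0 (T.G.dist v0 v), F (T.G.dist u w) =
      ((T.sph v0 (T.G.dist v0 w)).card : ℂ)⁻¹ *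
        ∑ u ∈ T.sph v0 (T.G.dist v0 w), F (T.G.dist v u) := by
  have pos : ∀ x, ((T.sph v0 (T.G.dist v0 x)).card : ℂ) ≠ 0 := fun x =>
    Nat.cast_ne_zero.2 (Finset.card_ne_zero_of_mem (T.mem_sph.2 rfl : x ∈ _))
  have h : ∀ v w, ((T.sph v0 (T.G.dist v0 w)).card : ℂ) *
      ∑ u ∈ T.sph v0 (T.G.dist v0 v), F (T.G.dist u w) =
      ∑ x ∈ T.sph v0 (T.G.dist v0 w), ∑ u ∈ T.sph v0 (T.G.dist v0 v), F (T.G.dist u x) := by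
    intro v w
    rw [Finset.sum_congr rfl
      (fun x hx => T.sum_rad v0 (T.G.dist v0 v) F x w (T.mem_sph.1 hx))]
    simp
  have h2 := h w v
  rw [Finset.sum_comm] at h2
  rw [inv_mul_eq_div, inv_mul_eq_div, div_eq_div_iff (pos v) (pos w)]
  have e : ∑ u ∈ T.sph v0 (T.G.dist v0 w), F (T.G.dist v u) =
      ∑ u ∈ T.sph v0 (T.G.dist v0 w), F (T.G.dist u v) :=
    Finset.sum_congr rfl fun u _ => by rw [SimpleGraph.dist_comm]
  rw [e, mul_comm, h v w, mul_comm, h2]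
  exact Finset.sum_congr rfl fun a _ =>
    Finset.sum_congr rfl fun b _ => by rw [SimpleGraph.dist_comm]

lemma radE_eq (v0 : V) (g : V → ℂ) (v : V) (hv : T.eps v = true) :
    radE T v0 g v = ((T.sph v0 (T.G.dist v0 v)).card : ℂ)⁻¹ *
      ∑ u ∈ T.sph v0 (T.G.dist v0 v), g u := by
  have : {u : V | T.eps u = true ∧ T.G.dist v0 u = T.G.dist v0 v} =
      {u : V | T.G.dist v0 u = T.G.dist v0 v} := by
    ext u
    simp only [Set.mem_setOf_eq, and_iff_right_iff_imp]
    exact fun h => (T.dist_parity v0 h).trans hv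
  rw [radE, this, Set.ncard_eq_toFinset_card _ (T.sphere_finite v0 _),
    finsum_mem_eq_finite_toFinset_sum _ (T.sphere_finite v0 _)]
  rfl

end SemiHomTree

theorem stmt_13 {qp qm : ℕ} (hqp : 2 ≤ qp) (hqm : 2 ≤ qm) {V : Type}
    (T : SemiHomTree qp qm V) (v0 : V) (hv0 : T.eps v0 = true)
    (F : ℕ → ℂ) (hF : (Function.support F).Finite)
    (g : V → ℂ) (hg : (Function.support g).Finite)
    (hgplus : ∀ v : V, g v ≠ 0 → T.eps v = true) :
    ∀ v : V, T.eps v = true →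
      radE T v0 (convF T F g) v = convF T F (radE T v0 g) v := by
  classical
  intro v hv
  set S := hg.toFinset with hS
  have mS : ∀ {w}, w ∈ S ↔ g w ≠ 0 := by simp [hS]
  set W := S.biUnion (fun u => T.sph v0 (T.G.dist v0 u)) with hW
  have WP : ∀ w ∈ W, T.eps w = true := by
    intro w hw
    obtain ⟨u, hu, hw⟩ := Finset.mem_biUnion.1 hw
    exact (T.dist_parity v0 (T.mem_sph.1 hw)).trans (hgplus u (mS.1 hu))
  have c1 : ∀ u, convF T F g u = ∑ w ∈ S, F (T.G.dist u w) * g w := by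
    intro u
    refine finsum_mem_eq_sum_of_subset _ ?_ ?_
    · rintro w ⟨_, hw⟩
      exact Finset.mem_coe.2 (mS.2 (right_ne_zero_of_mul hw))
    · intro w hw
      exact hgplus w (mS.1 hw)
  have c2 : convF T F (radE T v0 g) v = ∑ w ∈ W, F (T.G.dist v w) * radE T v0 g w := by
    refine finsum_mem_eq_sum_of_subset _ ?_ (fun w hw => WP w hw)
    rintro w ⟨hw1, hw⟩
    have h := right_ne_zero_of_mul hw
    rw [T.radE_eq v0 g w hw1] at h
    obtain ⟨u, hu, hu'⟩ := Finset.exists_ne_zero_of_sum_ne_zero (right_ne_zero_of_mul h)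
    exact Finset.mem_coe.2 (Finset.mem_biUnion.2
      ⟨u, mS.2 hu', T.mem_sph.2 (T.mem_sph.1 hu).symm⟩)
  have r : ∀ w ∈ W, F (T.G.dist v w) * radE T v0 g w =
      ∑ u ∈ S, if T.G.dist v0 w = T.G.dist v0 u then
        ((T.sph v0 (T.G.dist v0 u)).card : ℂ)⁻¹ * F (T.G.dist v w) * g u else 0 := by
    intro w hw
    have e : ∑ u ∈ T.sph v0 (T.G.dist v0 w), g u =
        ∑ u ∈ S, if T.G.dist v0 w = T.G.dist v0 u then g u else 0 := by
      rw [← Finset.sum_filter, ← Finset.sum_filter_ne_zero]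
      refine Finset.sum_congr ?_ fun _ _ => rfl
      ext u
      simp only [Finset.mem_filter, T.mem_sph, mS]
      constructor
      · rintro ⟨a, b⟩
        exact ⟨b, a.symm⟩
      · rintro ⟨a, b⟩
        exact ⟨b.symm, a⟩
    rw [T.radE_eq v0 g w (WP w hw), e, Finset.mul_sum, Finset.mul_sum]
    refine Finset.sum_congr rfl fun u _ => ?_
    split_ifs with h
    · rw [h]
      ring
    · simp
  rw [c2, Finset.sum_congr rfl r, Finset.sum_comm, T.radE_eq v0 _ v hv]
  simp only [c1]
  rw [Finset.sum_comm, Finset.mul_sum]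
  refine Finset.sum_congr rfl fun u hu => ?_
  have f : W.filter (fun w => T.G.dist v0 w = T.G.dist v0 u) = T.sph v0 (T.G.dist v0 u) := by
    ext w
    simp only [Finset.mem_filter, T.mem_sph]
    refine ⟨fun h => h.2, fun h => ⟨Finset.mem_biUnion.2 ⟨u, hu, T.mem_sph.2 h⟩, h⟩⟩
  rw [← Finset.sum_filter, f, ← Finset.sum_mul, ← Finset.sum_mul, ← Finset.mul_sum, ← mul_assoc,
    T.avg_symm v0 v u F]
end

section
/- Let f : V → ℂ be radial around v_0 with profile F, let γ ∈ ℂ, and assume μ_1 f = γ·f and f(v_0) = 1. Then for every v ∈ V_+ and every even n ∈ ℕ: Σ_{u ∈ C(n)} F(dist(u,v)) = #C(n)·F(|v|)·F(n). -/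
open scoped BigOperators ComplexOrder

namespace SHT

open Classical in
noncomputable def N {qp qm : ℕ} {V : Type} (T : SemiHomTree qp qm V) (u : V) : Finset V :=
  (T.nbr_finite u).toFinset

noncomputable def C {qp qm : ℕ} {V : Type} (T : SemiHomTree qp qm V) (v : V) (n : ℕ) : Finset V :=
  (T.sphere_finite v n).toFinset

def D (qp qm n : ℕ) : ℕ := if Even n then qp + 1 else qm + 1

section
variable {qp qm : ℕ} {V : Type} (T : SemiHomTree qp qm V)

lemma mem_N {u w : V} : w ∈ N T u ↔ T.G.Adj u w := by simp [N]

lemma mem_C {v w : V} {n : ℕ} : w ∈ C T v n ↔ T.G.dist v w = n := by simp [C]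

lemma dist_adj (v : V) {u w : V} (h : T.G.Adj u w) :
    T.G.dist v u = T.G.dist v w + 1 ∨ T.G.dist v w = T.G.dist v u + 1 :=
  T.acyclic.dist_eq_dist_add_one_of_adj_of_reachable v h (T.connected v u)

lemma exists_parent (v u : V) (n : ℕ) (h : T.G.dist v u = n + 1) :
    ∃ w, T.G.Adj u w ∧ T.G.dist v w = n := by
  obtain ⟨p, hp⟩ := T.connected.exists_walk_length_eq_dist u v
  rw [SimpleGraph.dist_comm, h] at hp
  cases p with
  | nil => simp at hp
  | cons hadj q =>
    rename_i w
    refine ⟨w, hadj, ?_⟩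
    simp at hp
    have h1 := SimpleGraph.dist_le q
    rw [SimpleGraph.dist_comm] at h1
    have := dist_adj T v hadj
    omega

lemma parent_unique (v u : V) (n : ℕ) (h : T.G.dist v u = n + 1) {w w' : V}
    (h1 : T.G.Adj u w) (h2 : T.G.dist v w = n) (h1' : T.G.Adj u w') (h2' : T.G.dist v w' = n) :
    w = w' := by
  obtain ⟨p, hp⟩ := T.connected.exists_walk_length_eq_dist w v
  obtain ⟨p', hp'⟩ := T.connected.exists_walk_length_eq_dist w' v
  rw [SimpleGraph.dist_comm] at hp hp' h
  have a := (SimpleGraph.Walk.cons h1 p).isPath_of_length_eq_dist (by simp; omega)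
  have a' := (SimpleGraph.Walk.cons h1' p').isPath_of_length_eq_dist (by simp; omega)
  have := T.acyclic.path_unique ⟨_, a⟩ ⟨_, a'⟩
  have h3 := congrArg (fun q : T.G.Path u v => q.1.snd) this
  simpa using h3

lemma parity (v : V) (hv : T.eps v = true) (n : ℕ) : ∀ u, T.G.dist v u = n →
    (T.eps u = true ↔ Even n) := by
  induction n with
  | zero =>
    intro u hu
    rw [T.connected.dist_eq_zero_iff] at hu
    subst hu; simp [hv]
  | succ n ih =>
    intro u hu
    obtain ⟨w, hw, hd⟩ := exists_parent T v u n hu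
    have := ih w hd
    rw [T.adj_parity hw] at this
    rw [Nat.even_add_one, ← this]
    simp

lemma card_N (v : V) (hv : T.eps v = true) (u : V) :
    (N T u).card = D qp qm (T.G.dist v u) := by
  have := parity T v hv _ u rfl
  rw [N, ← Set.ncard_eq_toFinset_card _ (T.nbr_finite u), D]
  split_ifs with h
  · exact T.degree_plus u (this.2 h)
  · exact T.degree_minus u (by simpa using (not_congr this).2 h)

lemma lap_eq (v : V) (hv : T.eps v = true) (h : V → ℂ) (u : V) (γ : ℂ) :
    lap T h u = γ * h u ↔ ∑ w ∈ N T u, h w = D qp qm (T.G.dist v u) * (γ * h u) := by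
  have := parity T v hv _ u rfl
  have hD : (((if T.eps u then qp else qm : ℕ) : ℂ) + 1) = D qp qm (T.G.dist v u) := by
    unfold D
    split_ifs <;> simp_all
  have hD0 : (D qp qm (T.G.dist v u) : ℂ) ≠ 0 := by
    unfold D
    split_ifs <;> norm_cast
  rw [lap, hD, finsum_mem_eq_finite_toFinset_sum _ (T.nbr_finite u), N]
  constructor
  · intro h; rw [← h]; field_simp
  · intro h; rw [h]; field_simp

lemma split (v u : V) (h : V → ℂ) : ∑ w ∈ N T u, h w =
    ∑ w ∈ (N T u).filter (fun w => T.G.dist v w = T.G.dist v u + 1), h w +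
    ∑ w ∈ (N T u).filter (fun w => T.G.dist v u = T.G.dist v w + 1), h w := by
  rw [← Finset.sum_filter_add_sum_filter_not _ (fun w => T.G.dist v w = T.G.dist v u + 1)]
  congr 1
  apply Finset.sum_congr _ (fun _ _ => rfl)
  apply Finset.filter_congr
  intro w hw
  have := dist_adj T v ((mem_N T).1 hw)
  omega

lemma card_down (v u : V) (n : ℕ) (hd : T.G.dist v u = n + 1) :
    ((N T u).filter (fun w => T.G.dist v w = n)).card = 1 := by
  obtain ⟨w, hw, h⟩ := exists_parent T v u n hd
  rw [Finset.card_eq_one]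
  refine ⟨w, ?_⟩
  ext w'
  simp only [Finset.mem_filter, mem_N, Finset.mem_singleton]
  constructor
  · rintro ⟨a, b⟩
    exact parent_unique T v u n hd a b hw h
  · rintro rfl
    exact ⟨hw, h⟩

def E (qp qm n : ℕ) : ℕ := if n = 0 then D qp qm 0 else D qp qm n - 1

lemma card_up (v : V) (hv : T.eps v = true) (u : V) :
    ((N T u).filter (fun w => T.G.dist v w = T.G.dist v u + 1)).card
      = E qp qm (T.G.dist v u) := by
  have h1 := card_N T v hv u
  rw [← Finset.card_filter_add_card_filter_not (fun w => T.G.dist v w = T.G.dist v u + 1)] at h1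
  have h2 : (N T u).filter (fun w => ¬ T.G.dist v w = T.G.dist v u + 1) =
    (N T u).filter (fun w => T.G.dist v u = T.G.dist v w + 1) := by
    apply Finset.filter_congr
    intro w hw
    have := dist_adj T v ((mem_N T).1 hw)
    omega
  rw [h2] at h1
  unfold E
  rcases hm : T.G.dist v u with _ | m
  · simp only [hm] at h1 ⊢
    simpa using h1
  · have := card_down T v u m hm
    simp only [hm, add_left_inj, eq_comm (a := m)] at h1 ⊢
    rw [if_neg (by omega)]
    omega

lemma sum_N_radial (v : V) (hv : T.eps v = true) (u : V) (F : ℕ → ℂ) :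
    ∑ w ∈ N T u, F (T.G.dist v w) = E qp qm (T.G.dist v u) * F (T.G.dist v u + 1) +
      (if T.G.dist v u = 0 then 0 else F (T.G.dist v u - 1)) := by
  rw [split T v u]
  congr 1
  · rw [← card_up T v hv u, ← nsmul_eq_mul]
    apply Finset.sum_eq_card_nsmul
    intro w hw
    rw [(Finset.mem_filter.1 hw).2]
  · rcases hm : T.G.dist v u with _ | m
    · simp
    · have := card_down T v u m hm
      rw [if_neg (by omega)]
      simp only [add_left_inj, eq_comm (a := m)]
      rw [← one_mul (F _), ← Nat.cast_one, ← this, ← nsmul_eq_mul]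
      apply Finset.sum_eq_card_nsmul
      intro w hw
      rw [(Finset.mem_filter.1 hw).2]
      simp

lemma exists_dist (hqp : 2 ≤ qp) (hqm : 2 ≤ qm) (v : V) (hv : T.eps v = true) (n : ℕ) :
    ∃ u, T.G.dist v u = n := by
  induction n with
  | zero => exact ⟨v, by simp⟩
  | succ n ih =>
    obtain ⟨u, hu⟩ := ih
    have h := card_up T v hv u
    have : 0 < E qp qm (T.G.dist v u) := by
      unfold E D; split_ifs <;> omega
    rw [← h, Finset.card_pos] at this
    obtain ⟨w, hw⟩ := this
    exact ⟨w, by rw [(Finset.mem_filter.1 hw).2, hu]⟩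

lemma sum_down (v : V) (n : ℕ) (h : V → ℂ) :
    ∑ u ∈ C T v n, ∑ w ∈ (N T u).filter (fun w => T.G.dist v w = T.G.dist v u + 1), h w
      = ∑ w ∈ C T v (n + 1), h w := by
  rw [Finset.sum_comm' (t' := C T v (n + 1))
    (s' := fun w => (N T w).filter (fun u => T.G.dist v u = n))]
  · apply Finset.sum_congr rfl
    intro w hw
    rw [Finset.sum_const, card_down T v w n ((mem_C T).1 hw), one_smul]
  · intro u w
    simp only [Finset.mem_filter, mem_N, mem_C, T.G.adj_comm u w]
    grind

lemma sum_up (v : V) (hv : T.eps v = true) (n : ℕ) (h : V → ℂ) :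
    ∑ u ∈ C T v (n + 1), ∑ w ∈ (N T u).filter (fun w => T.G.dist v u = T.G.dist v w + 1), h w
      = E qp qm n * ∑ w ∈ C T v n, h w := by
  rw [Finset.sum_comm' (t' := C T v n)
    (s' := fun w => (N T w).filter (fun u => T.G.dist v u = T.G.dist v w + 1)), Finset.mul_sum]
  · apply Finset.sum_congr rfl
    intro w hw
    rw [Finset.sum_const, card_up T v hv w, (mem_C T).1 hw, nsmul_eq_mul]
  · intro u w
    simp only [Finset.mem_filter, mem_N, mem_C, T.G.adj_comm u w]
    grind

lemma C_zero (v : V) : C T v 0 = {v} := by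
  ext w
  rw [mem_C, T.connected.dist_eq_zero_iff]
  simp [eq_comm]

lemma rec_one (v : V) (hv : T.eps v = true) (h : V → ℂ) (γ : ℂ)
    (hh : ∀ u, lap T h u = γ * h u) :
    ∑ w ∈ C T v 1, h w = D qp qm 0 * (γ * h v) := by
  have := (lap_eq T v hv h v γ).1 (hh v)
  have h2 := sum_down T v 0 h
  have h3 := split T v v h
  rw [C_zero, Finset.sum_singleton] at h2
  rw [this, h2] at h3
  simpa using h3.symm

lemma rec_succ (v : V) (hv : T.eps v = true) (h : V → ℂ) (γ : ℂ)
    (hh : ∀ u, lap T h u = γ * h u) (n : ℕ) :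
    ∑ w ∈ C T v (n + 2), h w = D qp qm (n + 1) * (γ * ∑ w ∈ C T v (n + 1), h w)
      - E qp qm n * ∑ w ∈ C T v n, h w := by
  have h1 : ∑ u ∈ C T v (n + 1), ∑ w ∈ N T u, h w =
      D qp qm (n + 1) * (γ * ∑ w ∈ C T v (n + 1), h w) := by
    rw [Finset.mul_sum, Finset.mul_sum]
    apply Finset.sum_congr rfl
    intro u hu
    rw [(lap_eq T v hv h u γ).1 (hh u), (mem_C T).1 hu]
  rw [← h1, ← sum_up T v hv n h, ← sum_down T v (n + 1) h]
  simp only [split T v _ h, Finset.sum_add_distrib]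
  ring

lemma key (v : V) (hv : T.eps v = true) (f h : V → ℂ) (γ : ℂ) (hf1 : f v = 1)
    (hf : ∀ u, lap T f u = γ * f u) (hh : ∀ u, lap T h u = γ * h u) (n : ℕ) :
    ∑ w ∈ C T v n, h w = h v * ∑ w ∈ C T v n, f w := by
  induction n using Nat.strong_induction_on with
  | _ n ih =>
    rcases n with _ | _ | n
    · simp [C_zero, hf1]
    · simp only [zero_add]
      rw [rec_one T v hv h γ hh, rec_one T v hv f γ hf, hf1]; ring
    · have a := ih n (by omega)
      have b := ih (n + 1) (by omega)
      rw [show n + 1 + 1 = n + 2 from rfl, rec_succ T v hv h γ hh, rec_succ T v hv f γ hf, a, b]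
      ring

end

end SHT

theorem stmt_14 {qp qm : ℕ} (hqp : 2 ≤ qp) (hqm : 2 ≤ qm) {V : Type}
    (T : SemiHomTree qp qm V) (v0 : V) (hv0 : T.eps v0 = true)
    (f : V → ℂ) (F : ℕ → ℂ) (hrad : ∀ v : V, f v = F (T.G.dist v0 v)) (γ : ℂ)
    (heig : ∀ v : V, lap T f v = γ * f v) (hone : f v0 = 1)
    (v : V) (hv : T.eps v = true) (n : ℕ) (hn : Even n) :
    (∑ᶠ u ∈ {u : V | T.G.dist v0 u = n}, F (T.G.dist u v)) =
      ({u : V | T.G.dist v0 u = n}.ncard : ℂ) * F (T.G.dist v0 v) * F n := by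
  have hg : ∀ u, lap T (fun u => F (T.G.dist v u)) u = γ * (fun u => F (T.G.dist v u)) u := by
    intro u
    rw [SHT.lap_eq T v hv, SHT.sum_N_radial T v hv]
    obtain ⟨u', hu'⟩ := SHT.exists_dist T hqp hqm v0 hv0 (T.G.dist v u)
    have := (SHT.lap_eq T v0 hv0 f u' γ).1 (heig u')
    simp only [hrad] at this
    rw [SHT.sum_N_radial T v0 hv0, hu'] at this
    exact this
  have hk := SHT.key T v0 hv0 f _ γ hone heig hg n
  rw [finsum_mem_eq_finite_toFinset_sum _ (T.sphere_finite v0 n),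
    Set.ncard_eq_toFinset_card _ (T.sphere_finite v0 n)]
  change ∑ u ∈ SHT.C T v0 n, _ = ((SHT.C T v0 n).card : ℂ) * _ * _
  have h1 : ∑ w ∈ SHT.C T v0 n, f w = (SHT.C T v0 n).card * F n := by
    rw [← nsmul_eq_mul]
    apply Finset.sum_eq_card_nsmul
    intro w hw
    rw [hrad, (SHT.mem_C T).1 hw]
  rw [h1] at hk
  simp only [T.G.dist_comm (u := v)] at hk
  rw [hk]
  ring
end
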